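/- Let A ∈ ℝ^{m×n} and B ∈ ℝ^{l×n} with B injective, and let p ∈ [1,∞). Then ‖A‖_{p↦1;B} ≤ min over Y ∈ ℝ^{l×m} with Bᵀ·Y = Aᵀ of ‖Y‖_{L^⊤_{1,p*}} ≤ (γ_p·√m / γ_1)·‖A‖_{p↦1;B}. -/

import Mathlib

/-!
The left inequality is Hölder's inequality: if `A = Yᵀ B`, then
`‖A v‖₁ ≤ ∑ⱼ ‖row_j Y‖₁ |(B v)ⱼ| ≤ ‖Y‖ ‖B v‖_p` (`sum_abs_mulVec_le`). Feasible matrices `Y` exist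
because `B` has a left inverse, so the supremum defining `‖A‖_{p↦1;B}` is over a bounded set.

The right inequality combines duality with a Gaussian averaging argument.

* Duality. The norm of `Y` is dual to the norm `Z ↦ (∑ⱼ ‖Z_j‖_∞ ^ p) ^ (1/p)` on `l × m` matrices
  under the pairing `∑ Y_ji Z_ji` (`Lpq_le_of_forall`). The condition `Bᵀ Y = Aᵀ` says that the
  functional represented by `Y` extends `B V ↦ tr (A V)` from the space of matrices `B V`. By
  Hahn–Banach (`exists_feasible_of_trace_le`) it suffices to bound `tr (A V)` by the dual norm
  of `B V`.
* Averaging (`trace_mul_le`). Let `g` be a standard Gaussian vector in `ℝ^m`. Since `⟨b, g⟩` has the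
  law of `‖b‖₂` times a standard Gaussian, `E ‖A V g‖₁ = γ_1 ∑ᵢ ‖row_i (A V)‖₂ ≥ γ_1 tr (A V)`,
  while `(E ‖B V g‖_p^p)^(1/p) = γ_p (∑ⱼ ‖row_j (B V)‖₂^p)^(1/p)`, which is at most
  `γ_p √m (∑ⱼ ‖row_j (B V)‖_∞^p)^(1/p)`. Applying `‖A u‖₁ ≤ ‖A‖_{p↦1;B} ‖B u‖_p` at `u = V g` and
  Jensen's inequality gives the bound with constant `γ_p √m / γ_1`.
-/


open Matrix
open scoped ENNReal

/-- The vector `p`-norm on `ℝ^k`, for `p ∈ [1,∞]` (given as an element of `ℝ≥0∞`). -/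
noncomputable def pNorm {k : ℕ} (p : ℝ≥0∞) (x : Fin k → ℝ) : ℝ :=
  if p = ∞ then ⨆ i, |x i| else (∑ i, |x i| ^ p.toReal) ^ (1 / p.toReal)

/-- The generalized matrix `p ↦ q ; B`-norm: `‖A‖_{p↦q;B} = sup { ‖A v‖_q : ‖B v‖_p ≤ 1 }`. -/
noncomputable def gnorm {m n l : ℕ} (A : Matrix (Fin m) (Fin n) ℝ)
    (B : Matrix (Fin l) (Fin n) ℝ) (p q : ℝ≥0∞) : ℝ :=
  sSup {r : ℝ | ∃ v : Fin n → ℝ, pNorm p (B.mulVec v) ≤ 1 ∧ r = pNorm q (A.mulVec v)}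

/-- `γ_s`, the `s`-th root of the `s`-th absolute moment of a standard Gaussian random
variable: `γ_s = (2^{s/2} Γ((s+1)/2) / √π)^{1/s}`. -/
noncomputable def gam (s : ℝ) : ℝ :=
  ((2 : ℝ) ^ (s / 2) * Real.Gamma ((s + 1) / 2) / Real.sqrt Real.pi) ^ (1 / s)

/-- The `L_{p,q}`-norm of a matrix: the `q`-norm of the vector of `p`-norms of its columns. -/
noncomputable def Lpq {a b : ℕ} (p q : ℝ≥0∞) (M : Matrix (Fin a) (Fin b) ℝ) : ℝ :=
  pNorm q (fun j : Fin b => pNorm p (fun i : Fin a => M i j))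

/-! ### Absolute moments of Gaussian vectors -/

open MeasureTheory ProbabilityTheory

/-- The absolute moments of a standard Gaussian variable; this is what `gam` is the root of. -/
lemma integral_abs_rpow_gaussianReal {s : ℝ} (hs : 0 < s) :
    ∫ x, |x| ^ s ∂(gaussianReal 0 1) =
      (2 : ℝ) ^ (s / 2) * Real.Gamma ((s + 1) / 2) / Real.sqrt Real.pi := by
  rw [integral_gaussianReal_eq_integral_smul one_ne_zero]
  have h1 : ∀ x : ℝ, gaussianPDFReal 0 1 x • |x| ^ s =
      (fun y : ℝ => (√(2 * Real.pi))⁻¹ * (y ^ s * Real.exp (-(1 / 2) * y ^ (2 : ℝ)))) |x| := by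
    intro x
    simp only [gaussianPDFReal, smul_eq_mul, NNReal.coe_one, mul_one, sub_zero, Real.rpow_two,
      sq_abs]
    ring_nf
  simp_rw [h1]
  rw [integral_comp_abs
      (f := fun y : ℝ => (√(2 * Real.pi))⁻¹ * (y ^ s * Real.exp (-(1 / 2) * y ^ (2 : ℝ)))),
    integral_const_mul,
    integral_rpow_mul_exp_neg_mul_rpow (by norm_num) (by linarith) (by norm_num)]
  have h2 : (1 / 2 : ℝ) ^ (-(s + 1) / 2) = 2 ^ (s / 2) * √2 := by
    rw [one_div, Real.inv_rpow (by norm_num), ← Real.rpow_neg (by norm_num),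
      Real.sqrt_eq_rpow, ← Real.rpow_add (by norm_num)]
    congr 1; ring
  rw [h2, Real.sqrt_mul (by norm_num)]
  field_simp

lemma gam_pos {s : ℝ} (hs : 0 < s) : 0 < gam s := by
  have := Real.Gamma_pos_of_pos (s := (s + 1) / 2) (by linarith)
  unfold gam
  positivity

lemma gam_rpow {s : ℝ} (hs : 0 < s) :
    gam s ^ s = (2 : ℝ) ^ (s / 2) * Real.Gamma ((s + 1) / 2) / Real.sqrt Real.pi := by
  have := Real.Gamma_pos_of_pos (s := (s + 1) / 2) (by linarith)
  unfold gam
  rw [← Real.rpow_mul (by positivity), one_div_mul_cancel hs.ne', Real.rpow_one]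

/-- The inner product of `b` with a standard Gaussian vector is distributed as `‖b‖` times a
standard Gaussian variable. -/
lemma map_inner_stdGaussian {m : ℕ} (b : EuclideanSpace ℝ (Fin m)) :
    (stdGaussian (EuclideanSpace ℝ (Fin m))).map (fun g => inner ℝ b g) =
      (gaussianReal 0 1).map (fun x => ‖b‖ * x) := by
  have h := IsGaussian.map_eq_gaussianReal (μ := stdGaussian (EuclideanSpace ℝ (Fin m)))
    (innerSL ℝ b)
  rw [integral_strongDual_stdGaussian, variance_dual_stdGaussian, innerSL_apply_norm] at h
  have h' : (fun g => inner ℝ b g) = ⇑(innerSL ℝ b) := by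
    ext g; simp
  rw [h', h, gaussianReal_map_const_mul]
  congr 1
  · simp
  · ext; simp

lemma integrable_abs_inner_rpow {m : ℕ} (b : EuclideanSpace ℝ (Fin m)) {s : ℝ} (hs : 0 < s) :
    Integrable (fun g => |inner ℝ b g| ^ s) (stdGaussian (EuclideanSpace ℝ (Fin m))) := by
  have h1 : Integrable (fun x : ℝ => |x| ^ s) (gaussianReal 0 1) := by
    have := (memLp_id_gaussianReal' (μ := 0) (v := 1) (ENNReal.ofReal s)
      ENNReal.ofReal_ne_top).integrable_norm_rpow (by simpa using hs) ENNReal.ofReal_ne_top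
    simpa [ENNReal.toReal_ofReal hs.le] using this
  have h2 : Integrable (fun x : ℝ => |x| ^ s)
      ((stdGaussian (EuclideanSpace ℝ (Fin m))).map (fun g => inner ℝ b g)) := by
    rw [map_inner_stdGaussian, integrable_map_measure (by fun_prop (disch := positivity)) (by fun_prop)]
    have : (fun x : ℝ => |x| ^ s) ∘ (fun x => ‖b‖ * x) = fun x => ‖b‖ ^ s * |x| ^ s := by
      ext x
      simp [abs_mul, Real.mul_rpow]
    rw [this]
    exact h1.const_mul _
  exact h2.comp_measurable (by fun_prop)

lemma integral_abs_inner_rpow {m : ℕ} (b : EuclideanSpace ℝ (Fin m)) {s : ℝ} (hs : 0 < s) :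
    ∫ g, |inner ℝ b g| ^ s ∂(stdGaussian (EuclideanSpace ℝ (Fin m))) = gam s ^ s * ‖b‖ ^ s := by
  have h1 := integral_map (μ := stdGaussian (EuclideanSpace ℝ (Fin m)))
    (φ := fun g => inner ℝ b g) (by fun_prop) (f := fun x : ℝ => |x| ^ s)
    (by fun_prop (disch := positivity))
  have h2 := integral_map (μ := gaussianReal 0 1)
    (φ := fun x => ‖b‖ * x) (by fun_prop) (f := fun x : ℝ => |x| ^ s)
    (by fun_prop (disch := positivity))
  rw [← h1, map_inner_stdGaussian, h2, gam_rpow hs, ← integral_abs_rpow_gaussianReal hs, mul_comm,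
    ← integral_const_mul]
  simp [abs_mul, Real.mul_rpow]

/-! ### The Gaussian averaging argument -/

/-- Here `‖b‖` on the right is the sup norm of `Fin m → ℝ`. -/
lemma norm_toLp_le {m : ℕ} (b : Fin m → ℝ) : ‖WithLp.toLp 2 b‖ ≤ √m * ‖b‖ := by
  rw [EuclideanSpace.norm_eq]
  apply Real.sqrt_le_iff.2 ⟨by positivity, ?_⟩
  rw [mul_pow, Real.sq_sqrt (by positivity)]
  calc ∑ i, ‖b i‖ ^ 2 ≤ ∑ _i : Fin m, ‖b‖ ^ 2 := by
        gcongr with i; exact norm_le_pi_norm b i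
    _ = m * ‖b‖ ^ 2 := by simp

lemma inner_toLp {m : ℕ} (a : Fin m → ℝ) (g : EuclideanSpace ℝ (Fin m)) :
    inner ℝ (WithLp.toLp 2 a) g = a ⬝ᵥ g.ofLp := by
  simp [PiLp.inner_apply, dotProduct, mul_comm]

/-- The averaging bound. The norm `‖(B * V) j‖` is the sup norm of the `j`-th row, so the last
factor is the norm dual to the transposed `L_{1,p*}`-norm. -/
lemma trace_mul_le {m n l : ℕ} (A : Matrix (Fin m) (Fin n) ℝ) (B : Matrix (Fin l) (Fin n) ℝ)
    {p : ℝ} (hp : 1 ≤ p) {G : ℝ} (hG : 0 ≤ G)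
    (h : ∀ u, ∑ i, |(A *ᵥ u) i| ≤ G * (∑ j, |(B *ᵥ u) j| ^ p) ^ (1 / p))
    (V : Matrix (Fin n) (Fin m) ℝ) :
    (A * V).trace ≤ gam p * √m / gam 1 * G * (∑ j, ‖(B * V) j‖ ^ p) ^ (1 / p) := by
  have hp0 : 0 < p := by linarith
  set μ := stdGaussian (EuclideanSpace ℝ (Fin m))
  set a : Fin m → EuclideanSpace ℝ (Fin m) := fun i => WithLp.toLp 2 ((A * V) i)
  set b : Fin l → EuclideanSpace ℝ (Fin m) := fun j => WithLp.toLp 2 ((B * V) j)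
  set X : EuclideanSpace ℝ (Fin m) → ℝ := fun g => ∑ i, |inner ℝ (a i) g|
  set Z : EuclideanSpace ℝ (Fin m) → ℝ := fun g => ∑ j, |inner ℝ (b j) g| ^ p
  have hZ0 : ∀ g, 0 ≤ Z g := fun g => by positivity
  have hX0 : ∀ g, 0 ≤ X g := fun g => by positivity
  -- `h` applied to the random vector `u = V g`.
  have hXZ : ∀ g, X g ≤ G * Z g ^ (1 / p) := by
    intro g
    have := h (V *ᵥ g.ofLp)
    simp only [mulVec_mulVec] at this
    simp only [X, Z, a, b, inner_toLp]
    exact this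
  have hXZp : ∀ g, X g ^ p ≤ G ^ p * Z g := by
    intro g
    have := Real.rpow_le_rpow (hX0 g) (hXZ g) hp0.le
    rwa [Real.mul_rpow hG (by have := hZ0 g; positivity), ← Real.rpow_mul (hZ0 g),
      one_div_mul_cancel hp0.ne', Real.rpow_one] at this
  have hXi : ∀ i ∈ Finset.univ, Integrable (fun g => |inner ℝ (a i) g|) μ := fun i _ => by
    simpa using integrable_abs_inner_rpow (a i) one_pos
  have hZi : ∀ j ∈ Finset.univ, Integrable (fun g => |inner ℝ (b j) g| ^ p) μ :=
    fun j _ => integrable_abs_inner_rpow (b j) hp0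
  have hXint : Integrable X μ := integrable_finsetSum _ hXi
  have hZint : Integrable Z μ := integrable_finsetSum _ hZi
  have hXp : Integrable (fun g => X g ^ p) μ := by
    refine (hZint.const_mul (G ^ p)).mono' ?_ (Filter.Eventually.of_forall fun g => ?_)
    · exact (hXint.aestronglyMeasurable.aemeasurable.pow_const p).aestronglyMeasurable
    · rw [Real.norm_of_nonneg (Real.rpow_nonneg (hX0 g) p)]
      exact hXZp g
  have hEX : ∫ g, X g ∂μ = gam 1 * ∑ i, ‖a i‖ := by
    rw [integral_finsetSum _ hXi, Finset.mul_sum]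
    refine Finset.sum_congr rfl fun i _ => ?_
    simpa using integral_abs_inner_rpow (a i) one_pos
  have hEZ : ∫ g, Z g ∂μ = gam p ^ p * ∑ j, ‖b j‖ ^ p := by
    rw [integral_finsetSum _ hZi, Finset.mul_sum]
    exact Finset.sum_congr rfl fun j _ => integral_abs_inner_rpow (b j) hp0
  have hJ : (∫ g, X g ∂μ) ^ p ≤ ∫ g, X g ^ p ∂μ :=
    (convexOn_rpow hp).map_integral_le (Real.continuous_rpow_const hp0.le).continuousOn
      isClosed_Ici (Filter.Eventually.of_forall hX0) hXint hXp
  have hg1 : 0 < gam 1 := gam_pos one_pos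
  have hgp : 0 < gam p := gam_pos hp0
  have hb : (∑ j, ‖b j‖ ^ p) ≤ √m ^ p * ∑ j, ‖(B * V) j‖ ^ p := by
    rw [Finset.mul_sum]
    gcongr with j
    rw [← Real.mul_rpow (by positivity) (by positivity)]
    exact Real.rpow_le_rpow (by positivity) (norm_toLp_le _) hp0.le
  have hE : gam 1 * ∑ i, ‖a i‖ ≤ G * (gam p * √m) * (∑ j, ‖(B * V) j‖ ^ p) ^ (1 / p) := by
    rw [← Real.rpow_le_rpow_iff (by positivity) (by positivity) hp0, ← hEX]
    calc (∫ g, X g ∂μ) ^ p ≤ ∫ g, X g ^ p ∂μ := hJ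
      _ ≤ ∫ g, G ^ p * Z g ∂μ := integral_mono hXp (hZint.const_mul _) hXZp
      _ = G ^ p * (gam p ^ p * ∑ j, ‖b j‖ ^ p) := by rw [integral_const_mul, hEZ]
      _ ≤ G ^ p * (gam p ^ p * (√m ^ p * ∑ j, ‖(B * V) j‖ ^ p)) := by gcongr
      _ = _ := by
        rw [Real.mul_rpow (by positivity) (by positivity),
          Real.mul_rpow (by positivity) (by positivity),
          Real.mul_rpow (by positivity) (by positivity), ← Real.rpow_mul (by positivity),
          one_div_mul_cancel hp0.ne', Real.rpow_one]
        ring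
  -- The trace only sees the diagonal, and `(A V)_ii ≤ ‖row_i (A V)‖₂`.
  have htr : (A * V).trace ≤ ∑ i, ‖a i‖ := by
    refine Finset.sum_le_sum fun i _ => ?_
    exact (le_abs_self _).trans (PiLp.norm_apply_le (a i) i)
  calc (A * V).trace ≤ ∑ i, ‖a i‖ := htr
    _ ≤ G * (gam p * √m) * (∑ j, ‖(B * V) j‖ ^ p) ^ (1 / p) / gam 1 := by
      rw [le_div_iff₀ hg1, mul_comm]; exact hE
    _ = _ := by ring

/-! ### Vector norms and Hölder duality -/

lemma pNorm_one {k : ℕ} (x : Fin k → ℝ) : pNorm 1 x = ∑ i, |x i| := by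
  simp [pNorm]

lemma pNorm_ofReal {k : ℕ} {p : ℝ} (hp : 0 ≤ p) (x : Fin k → ℝ) :
    pNorm (ENNReal.ofReal p) x = (∑ i, |x i| ^ p) ^ (1 / p) := by
  simp [pNorm, ENNReal.toReal_ofReal hp]

lemma pNorm_top {k : ℕ} (x : Fin k → ℝ) : pNorm ∞ x = ⨆ i, |x i| := by
  simp [pNorm]

lemma pNorm_nonneg {k : ℕ} (p : ℝ≥0∞) (x : Fin k → ℝ) : 0 ≤ pNorm p x := by
  unfold pNorm
  split_ifs
  · exact Real.iSup_nonneg fun i => abs_nonneg _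
  · positivity

/-- The Hölder conjugate `p*` of a real exponent `p ≥ 1`; the case `p = 1`, where `p / (p - 1)` is
the junk value `0`, is sent to `∞`. -/
noncomputable def conjExp (p : ℝ) : ℝ≥0∞ :=
  if p = 1 then (∞ : ℝ≥0∞) else ENNReal.ofReal (p / (p - 1))

lemma sum_mul_le_conjExp {k : ℕ} {p : ℝ} (hp : 1 ≤ p) (y w : Fin k → ℝ) :
    ∑ j, |y j| * |w j| ≤ pNorm (conjExp p) y * (∑ j, |w j| ^ p) ^ (1 / p) := by
  unfold conjExp
  split_ifs with h
  · subst h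
    rw [pNorm_top]
    simp only [Real.rpow_one, div_one, Finset.mul_sum]
    gcongr with j
    exact le_ciSup (f := fun i => |y i|) (Set.finite_range _).bddAbove j
  · have hp1 : 1 < p := lt_of_le_of_ne hp (Ne.symm h)
    have hc : (p / (p - 1)).HolderConjugate p := (Real.HolderConjugate.conjExponent hp1).symm
    rw [pNorm_ofReal hc.nonneg]
    simpa using Real.inner_le_Lp_mul_Lq Finset.univ (fun j => |y j|) (fun j => |w j|) hc

/-- The converse of Hölder's inequality: any constant that works in Hölder's inequality for `y`
against all nonnegative `w` is at least the conjugate norm of `y`. -/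
lemma pNorm_conjExp_le {k : ℕ} {p : ℝ} (hp : 1 ≤ p) {C : ℝ} (hC : 0 ≤ C) (y : Fin k → ℝ)
    (h : ∀ w : Fin k → ℝ, (∀ j, 0 ≤ w j) →
      ∑ j, |y j| * w j ≤ C * (∑ j, w j ^ p) ^ (1 / p)) :
    pNorm (conjExp p) y ≤ C := by
  unfold conjExp
  split_ifs with hp1
  · subst hp1
    rw [pNorm_top]
    refine Real.iSup_le (fun j => ?_) hC
    have := h (Pi.single j 1) (fun i => by
      by_cases hij : i = j
      · subst hij; simp
      · simp [hij])
    simpa [Pi.single_apply] using this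
  · have hp1' : 1 < p := lt_of_le_of_ne hp (Ne.symm hp1)
    have hc : (p / (p - 1)).HolderConjugate p := (Real.HolderConjugate.conjExponent hp1').symm
    rw [pNorm_ofReal hc.nonneg]
    obtain ⟨g, hg, hgy⟩ :=
      (NNReal.isGreatest_Lp Finset.univ (fun j => Real.nnabs (y j)) hc).1
    have hgy' := congrArg NNReal.toReal hgy
    simp only [NNReal.coe_sum, NNReal.coe_mul, NNReal.coe_rpow, Real.coe_nnabs] at hgy'
    rw [← hgy']
    have hg' : ∑ j, (g j : ℝ) ^ p ≤ 1 := by exact_mod_cast hg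
    calc _ ≤ C * (∑ j, (g j : ℝ) ^ p) ^ (1 / p) := h (fun j => g j) fun j => (g j).2
      _ ≤ C * 1 := by
        gcongr
        exact Real.rpow_le_one (by positivity) hg' (by have := hc.symm.pos; positivity)
      _ = C := mul_one C

/-! ### Duality for the transposed `L_{1,p*}`-norm -/

lemma Lpq_nonneg {a b : ℕ} (p q : ℝ≥0∞) (M : Matrix (Fin a) (Fin b) ℝ) : 0 ≤ Lpq p q M :=
  pNorm_nonneg _ _

lemma Lpq_one {a b : ℕ} (q : ℝ≥0∞) (Y : Matrix (Fin a) (Fin b) ℝ) :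
    Lpq 1 q Yᵀ = pNorm q (fun j => ∑ i, |Y j i|) := by
  simp [Lpq, pNorm_one]

/-- Any feasible `Y`, that is, any factorization `A = Yᵀ B`, bounds `‖A v‖₁` in terms of
`‖B v‖_p`. -/
lemma sum_abs_mulVec_le {m n l : ℕ} {A : Matrix (Fin m) (Fin n) ℝ}
    {B : Matrix (Fin l) (Fin n) ℝ} {Y : Matrix (Fin l) (Fin m) ℝ} (hY : Bᵀ * Y = Aᵀ)
    {p : ℝ} (hp : 1 ≤ p) (v : Fin n → ℝ) :
    ∑ i, |(A *ᵥ v) i| ≤ Lpq 1 (conjExp p) Yᵀ * (∑ j, |(B *ᵥ v) j| ^ p) ^ (1 / p) := by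
  have hA : A = Yᵀ * B := by
    rw [← transpose_transpose A, ← hY, transpose_mul, transpose_transpose]
  calc ∑ i, |(A *ᵥ v) i| = ∑ i, |∑ j, Y j i * (B *ᵥ v) j| := by
        rw [hA, ← mulVec_mulVec]
        rfl
    _ ≤ ∑ i, ∑ j, |Y j i| * |(B *ᵥ v) j| := by
        gcongr with i
        refine (Finset.abs_sum_le_sum_abs _ _).trans (le_of_eq ?_)
        simp [abs_mul]
    _ = ∑ j, |(∑ i, |Y j i|)| * |(B *ᵥ v) j| := by
        rw [Finset.sum_comm]
        refine Finset.sum_congr rfl fun j _ => ?_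
        rw [abs_of_nonneg (a := ∑ i, |Y j i|) (by positivity), Finset.sum_mul]
    _ ≤ _ := by
        rw [Lpq_one]
        exact sum_mul_le_conjExp hp _ _

/-- A linear functional `Z ↦ ∑ Y_ji Z_ji` dominated by `C` times the norm
`(∑ⱼ ‖Z_j‖_∞ ^ p) ^ (1/p)` is represented by a matrix `Y` of transposed `L_{1,p*}`-norm at most
`C`. -/
lemma Lpq_le_of_forall {m l : ℕ} {p : ℝ} (hp : 1 ≤ p) {C : ℝ} (hC : 0 ≤ C)
    (Y : Matrix (Fin l) (Fin m) ℝ)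
    (h : ∀ Z : Fin l → Fin m → ℝ, ∑ j, ∑ i, Y j i * Z j i ≤
      C * (∑ j, ‖Z j‖ ^ p) ^ (1 / p)) :
    Lpq 1 (conjExp p) Yᵀ ≤ C := by
  have hp0 : 0 < p := by linarith
  rw [Lpq_one]
  refine pNorm_conjExp_le hp hC _ fun w hw => ?_
  -- The test matrix carries the signs of `Y`, scaled by `w j` in row `j`.
  calc ∑ j, |(∑ i, |Y j i|)| * w j = ∑ j, ∑ i, Y j i * ((SignType.sign (Y j i) : ℝ) * w j) := by
        refine Finset.sum_congr rfl fun j _ => ?_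
        rw [abs_of_nonneg (a := ∑ i, |Y j i|) (by positivity), Finset.sum_mul]
        refine Finset.sum_congr rfl fun i _ => ?_
        rw [← mul_assoc, self_mul_sign]
    _ ≤ C * (∑ j, ‖fun i => (SignType.sign (Y j i) : ℝ) * w j‖ ^ p) ^ (1 / p) :=
        h fun j i => (SignType.sign (Y j i) : ℝ) * w j
    _ ≤ C * (∑ j, w j ^ p) ^ (1 / p) := by
        gcongr with j
        refine (pi_norm_le_iff_of_nonneg (hw j)).2 fun i => ?_
        rw [norm_mul, Real.norm_of_nonneg (hw j)]
        refine mul_le_of_le_one_left (hw j) ?_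
        rcases SignType.sign (Y j i) with _ | _ | _ <;> simp

/-- Hahn–Banach: a bound for `tr (A V)` by a multiple of `(∑ⱼ ‖(B V)ⱼ‖_∞ ^ p) ^ (1/p)`, valid
for all `V`, produces a feasible matrix `Y` whose norm is at most that multiple. -/
lemma exists_feasible_of_trace_le {m n l : ℕ} {A : Matrix (Fin m) (Fin n) ℝ}
    {B : Matrix (Fin l) (Fin n) ℝ} {L : Matrix (Fin n) (Fin l) ℝ} (hL : L * B = 1)
    {p : ℝ} (hp : 1 ≤ p) {C : ℝ} (hC : 0 ≤ C)
    (h : ∀ V : Matrix (Fin n) (Fin m) ℝ,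
      (A * V).trace ≤ C * (∑ j, ‖(B * V) j‖ ^ p) ^ (1 / p)) :
    ∃ Y : Matrix (Fin l) (Fin m) ℝ, Bᵀ * Y = Aᵀ ∧ Lpq 1 (conjExp p) Yᵀ ≤ C := by
  have hp0 : 0 < p := by linarith
  let N : Matrix (Fin l) (Fin m) ℝ → ℝ := fun Z => C * (∑ j, ‖Z j‖ ^ p) ^ (1 / p)
  let F : Matrix (Fin l) (Fin m) ℝ →ₗ[ℝ] ℝ :=
    traceLinearMap (Fin m) ℝ ℝ ∘ₗ mulLeftLinearMap (Fin m) ℝ (A * L)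
  let R : Submodule ℝ (Matrix (Fin l) (Fin m) ℝ) :=
    LinearMap.range (mulLeftLinearMap (Fin m) ℝ B)
  -- On the range of `V ↦ B V` the functional `F Z = tr (A L Z)` does not depend on the choice of the
  -- left inverse `L`.
  have hFB : ∀ V : Matrix (Fin n) (Fin m) ℝ, F (B * V) = (A * V).trace := fun V => by
    simp [F, ← Matrix.mul_assoc L B V, hL]
  obtain ⟨g, hg, hgN⟩ := exists_extension_of_le_sublinear ⟨R, F ∘ₗ R.subtype⟩ N
    (fun c hc Z => by
      have : ∀ j, ‖(c • Z) j‖ ^ p = c ^ p * ‖Z j‖ ^ p := fun j => by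
        rw [show (c • Z) j = c • Z j from rfl, norm_smul, Real.norm_of_nonneg hc.le,
          Real.mul_rpow hc.le (norm_nonneg _)]
      simp only [N, this]
      rw [← Finset.mul_sum, Real.mul_rpow (by positivity) (by positivity),
        ← Real.rpow_mul hc.le, mul_one_div_cancel hp0.ne', Real.rpow_one]
      ring)
    (fun Z W => by
      have hM := Real.Lp_add_le Finset.univ (fun j => ‖Z j‖) (fun j => ‖W j‖) hp
      simp only [abs_norm] at hM
      simp only [N, ← mul_add]
      refine mul_le_mul_of_nonneg_left (le_trans ?_ hM) hC
      gcongr with j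
      exact (norm_add_le (Z j) (W j)).trans (le_abs_self _))
    (by
      rintro ⟨_, V, rfl⟩
      exact (hFB V).trans_le (h V))
  have hrep : ∀ Z : Matrix (Fin l) (Fin m) ℝ,
      g Z = ∑ j, ∑ i, g (Matrix.single j i (1 : ℝ)) * Z j i := by
    intro Z
    conv_lhs => rw [matrix_eq_sum_single Z]
    simp only [map_sum]
    refine Finset.sum_congr rfl fun j _ => Finset.sum_congr rfl fun i _ => ?_
    rw [← mul_one (Z j i), ← smul_eq_mul, ← smul_single, map_smul]
    simp [mul_comm]
  refine ⟨Matrix.of fun j i => g (Matrix.single j i (1 : ℝ)), ?_, ?_⟩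
  -- Testing the extension on `B E` for each matrix unit `E` gives `Bᵀ Y = Aᵀ` entrywise.
  · ext k i
    have h1 : g (B * Matrix.single k i (1 : ℝ)) = (A * Matrix.single k i (1 : ℝ)).trace := by
      rw [← hFB]
      exact hg ⟨B * Matrix.single k i (1 : ℝ), Matrix.single k i (1 : ℝ), rfl⟩
    rw [hrep] at h1
    simpa [Matrix.mul_apply, Matrix.single_apply, Matrix.trace, mul_comm, ite_and] using h1
  · refine Lpq_le_of_forall hp hC _ fun Z => ?_
    have := hgN Z
    rw [hrep Z] at this
    exact this

/-! ### The two inequalities -/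

lemma exists_left_inverse {n l : ℕ} {B : Matrix (Fin l) (Fin n) ℝ}
    (hB : Function.Injective B.mulVec) : ∃ L : Matrix (Fin n) (Fin l) ℝ, L * B = 1 := by
  obtain ⟨f, hf⟩ := LinearMap.exists_leftInverse_of_injective (Matrix.toLin' B)
    (LinearMap.ker_eq_bot.2 hB)
  refine ⟨LinearMap.toMatrix' f, ?_⟩
  have := congrArg LinearMap.toMatrix' hf
  rwa [LinearMap.toMatrix'_comp, LinearMap.toMatrix'_toLin', LinearMap.toMatrix'_id] at this

/-- Let `A ∈ ℝ^{m×n}`, `B ∈ ℝ^{l×n}` injective, and `p ∈ [1,∞)` with Hölder conjugate `p*`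
(`p* = ∞` when `p = 1`).  Then
`‖A‖_{p↦1;B} ≤ min { ‖Y‖_{L^⊤_{1,p*}} : Bᵀ Y = Aᵀ } ≤ (γ_p √m / γ_1)·‖A‖_{p↦1;B}`. -/
theorem stmt18 (m n l : ℕ)
    (A : Matrix (Fin m) (Fin n) ℝ) (B : Matrix (Fin l) (Fin n) ℝ)
    (hB : Function.Injective B.mulVec)
    (p : ℝ) (hp : 1 ≤ p) :
    gnorm A B (ENNReal.ofReal p) 1 ≤
      sInf {r : ℝ | ∃ Y : Matrix (Fin l) (Fin m) ℝ, Bᵀ * Y = Aᵀ ∧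
        r = Lpq 1 (if p = 1 then (∞ : ℝ≥0∞) else ENNReal.ofReal (p / (p - 1))) Yᵀ} ∧
    sInf {r : ℝ | ∃ Y : Matrix (Fin l) (Fin m) ℝ, Bᵀ * Y = Aᵀ ∧
        r = Lpq 1 (if p = 1 then (∞ : ℝ≥0∞) else ENNReal.ofReal (p / (p - 1))) Yᵀ} ≤
      (gam p * Real.sqrt (m : ℝ) / gam 1) * gnorm A B (ENNReal.ofReal p) 1 := by
  change gnorm A B (ENNReal.ofReal p) 1 ≤
      sInf {r : ℝ | ∃ Y : Matrix (Fin l) (Fin m) ℝ, Bᵀ * Y = Aᵀ ∧ r = Lpq 1 (conjExp p) Yᵀ} ∧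
    sInf {r : ℝ | ∃ Y : Matrix (Fin l) (Fin m) ℝ, Bᵀ * Y = Aᵀ ∧ r = Lpq 1 (conjExp p) Yᵀ} ≤
      (gam p * Real.sqrt (m : ℝ) / gam 1) * gnorm A B (ENNReal.ofReal p) 1
  have hp0 : 0 < p := by linarith
  obtain ⟨L, hL⟩ := exists_left_inverse hB
  have hY₀ : Bᵀ * (A * L)ᵀ = Aᵀ := by
    rw [← transpose_mul, Matrix.mul_assoc, hL, Matrix.mul_one]
  set G := gnorm A B (ENNReal.ofReal p) 1 with hGdef
  have hbound : ∀ Y : Matrix (Fin l) (Fin m) ℝ, Bᵀ * Y = Aᵀ →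
      Lpq 1 (conjExp p) Yᵀ ∈ upperBounds {r : ℝ | ∃ v : Fin n → ℝ,
        pNorm (ENNReal.ofReal p) (B.mulVec v) ≤ 1 ∧ r = pNorm 1 (A.mulVec v)} := by
    rintro Y hY r ⟨v, hv, rfl⟩
    rw [pNorm_ofReal hp0.le] at hv
    rw [pNorm_one]
    exact (sum_abs_mulVec_le hY hp v).trans (mul_le_of_le_one_right (Lpq_nonneg _ _ _) hv)
  have hzero : (0 : ℝ) ∈ {r : ℝ | ∃ v : Fin n → ℝ,
      pNorm (ENNReal.ofReal p) (B.mulVec v) ≤ 1 ∧ r = pNorm 1 (A.mulVec v)} := by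
    refine ⟨0, ?_, by simp [pNorm_one]⟩
    rw [pNorm_ofReal hp0.le]
    simp [Real.zero_rpow hp0.ne', Real.zero_rpow (inv_ne_zero hp0.ne')]
  have hG : 0 ≤ G := le_csSup ⟨_, hbound _ hY₀⟩ hzero
  -- Homogeneity turns the definition of `G` as a supremum into an inequality for all `u`.
  have hGu : ∀ u, ∑ i, |(A *ᵥ u) i| ≤ G * (∑ j, |(B *ᵥ u) j| ^ p) ^ (1 / p) := by
    intro u
    set t := (∑ j, |(B *ᵥ u) j| ^ p) ^ (1 / p) with ht
    have ht0 : 0 ≤ t := by positivity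
    -- If `‖B u‖_p = 0`, rescaling is impossible, but the Hölder bound already gives `A u = 0`.
    rcases ht0.eq_or_lt with h0 | hpos
    · have := sum_abs_mulVec_le hY₀ hp u
      rw [← ht, ← h0, mul_zero] at this
      rwa [← h0, mul_zero]
    · have hmem : pNorm 1 (A *ᵥ (t⁻¹ • u)) ≤ G := by
        refine le_csSup ⟨_, hbound _ hY₀⟩ ⟨t⁻¹ • u, ?_, rfl⟩
        rw [pNorm_ofReal hp0.le]
        have : ∀ j, |(B *ᵥ (t⁻¹ • u)) j| ^ p = t⁻¹ ^ p * |(B *ᵥ u) j| ^ p := fun j => by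
          rw [mulVec_smul, Pi.smul_apply, smul_eq_mul, abs_mul, abs_of_pos (inv_pos.2 hpos),
            Real.mul_rpow (by positivity) (by positivity)]
        simp only [this]
        rw [← Finset.mul_sum, Real.mul_rpow (by positivity) (by positivity),
          ← Real.rpow_mul (by positivity), mul_one_div_cancel hp0.ne', Real.rpow_one, ← ht,
          inv_mul_cancel₀ hpos.ne']
      rw [pNorm_one] at hmem
      simp only [mulVec_smul, Pi.smul_apply, smul_eq_mul, abs_mul, abs_of_pos (inv_pos.2 hpos)]
        at hmem
      rw [← Finset.mul_sum, inv_mul_le_iff₀ hpos] at hmem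
      linarith
  constructor
  · refine le_csInf ⟨_, _, hY₀, rfl⟩ ?_
    rintro r ⟨Y, hY, rfl⟩
    exact csSup_le (Set.nonempty_of_mem hzero) (hbound Y hY)
  · have h1 := gam_pos one_pos
    have h2 := gam_pos hp0
    obtain ⟨Y, hY, hYC⟩ := exists_feasible_of_trace_le hL hp
      (C := gam p * √m / gam 1 * G) (by positivity) (trace_mul_le A B hp hG hGu)
    refine le_trans (csInf_le ?_ ?_) hYC
    · refine ⟨0, ?_⟩
      rintro r ⟨Y, -, rfl⟩
      exact Lpq_nonneg _ _ _
    · exact ⟨Y, hY, rfl⟩
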